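/- arXiv:2604.00631 — 2 statements merged into one kernel-verified Lean document; each statement's English description precedes it below -/
import Mathlib

section
/- Let n, g ≥ 1 with g ≤ n, let w : {1, …, g} → {1, …, n} be injective, and let q = (1/n)·𝟙_n, q_A ∈ ℝ^n the indicator vector of the image of w. Let V_G ∈ ℝ^{g×(n+g)} be the matrix whose j-th row is [−I_{n|w(j)}, I_{g|j}]. For x ∈ ℝ^{2n}, X ∈ ℝ^{2g}, w_G ∈ ℝ^g, define Y = (V_G ⊗ C)·(x; X) + w_G (where (x; X) ∈ ℝ^{2(n+g)} is the vertical concatenation), z̃ = (q^⊤ ⊗ I₂)·x − (q_G^⊤ ⊗ I₂)·X with q_G = (1/g)·𝟙_g, and z = ((I_n − 𝟙_n·q^⊤) ⊗ I₂)·x. Then 𝟙_g^⊤·Y = −g·C·z̃ − (q_A^⊤ ⊗ C)·z + 𝟙_g^⊤·w_G. -/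
/-!
After expanding the Kronecker products, every term only involves the phase coordinates
`x (i, 0)` and `X (j, 0)`. With `m` the mean of the phases `x (i, 0)`, one has
`Y j = X (j, 0) - x (w j, 0) + wG j`, `C z̃ = m - (1/g) ∑ j, X (j, 0)` and
`z (i, 0) = x (i, 0) - m`. Since `w` is injective, pairing with the indicator `q_A` of its image is
summation along `w` (`sum_range_indicator`), so `(q_Aᵀ ⊗ C) z = ∑ j, x (w j, 0) - g m`, and the
two occurrences of `g m` cancel.
-/

open Matrix Kronecker

/-- The clock output matrix `C = [1, 0]`. -/
noncomputable def clockC : Matrix (Fin 1) (Fin 2) ℝ := !![1, 0]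

theorem sum_range_indicator {n g : ℕ} {w : Fin g → Fin n} (hw : Function.Injective w)
    (f : Fin n → ℝ) :
    ∑ i, (if ∃ j, w j = i then (1 : ℝ) else 0) * f i = ∑ j, f (w j) := by
  rw [← Finset.sum_image (s := Finset.univ) (g := w) (f := f) (fun a _ b _ h => hw h)]
  simp only [ite_mul, one_mul, zero_mul, ← Finset.sum_filter]
  congr 1
  ext i
  simp

theorem stmt9 (n g : ℕ) (hn : 1 ≤ n) (hg : 1 ≤ g) (hgn : g ≤ n)
    (w : Fin g → Fin n) (hw : Function.Injective w)
    (VG : Matrix (Fin g) (Fin n ⊕ Fin g) ℝ)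
    (hVG : ∀ j p, VG j p
      = Sum.elim (fun i => if i = w j then (-1 : ℝ) else 0)
          (fun j' => if j' = j then (1 : ℝ) else 0) p)
    (qT : Matrix (Fin 1) (Fin n) ℝ) (hqT : qT = Matrix.of fun _ _ => 1 / (n : ℝ))
    (qGT : Matrix (Fin 1) (Fin g) ℝ) (hqGT : qGT = Matrix.of fun _ _ => 1 / (g : ℝ))
    (qA : Matrix (Fin 1) (Fin n) ℝ)
    (hqA : ∀ i, qA 0 i = if ∃ j, w j = i then (1 : ℝ) else 0)
    (x : Fin n × Fin 2 → ℝ) (X : Fin g × Fin 2 → ℝ) (wG : Fin g → ℝ)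
    (Y : Fin g → ℝ)
    (hY : ∀ j, Y j
      = ((VG ⊗ₖ clockC) *ᵥ
          (fun p => Sum.elim (fun i => x (i, p.2)) (fun j' => X (j', p.2)) p.1)) (j, 0)
        + wG j)
    (zt : Fin 2 → ℝ)
    (hzt : ∀ i, zt i
      = ((qT ⊗ₖ (1 : Matrix (Fin 2) (Fin 2) ℝ)) *ᵥ x) (0, i)
        - ((qGT ⊗ₖ (1 : Matrix (Fin 2) (Fin 2) ℝ)) *ᵥ X) (0, i))
    (z : Fin n × Fin 2 → ℝ)
    (hz : z = ((((1 : Matrix (Fin n) (Fin n) ℝ)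
        - (Matrix.of (fun _ _ => (1 : ℝ)) : Matrix (Fin n) (Fin 1) ℝ) * qT)
          ⊗ₖ (1 : Matrix (Fin 2) (Fin 2) ℝ)) *ᵥ x)) :
    ∑ j, Y j
      = -(g : ℝ) * (clockC *ᵥ zt) 0 - ((qA ⊗ₖ clockC) *ᵥ z) (0, 0) + ∑ j, wG j := by
  have hY' : ∀ j, Y j = X (j, 0) - x (w j, 0) + wG j := by
    intro j
    rw [hY]
    simp [Matrix.mulVec, dotProduct, Fintype.sum_prod_type, Fintype.sum_sum_type, clockC, hVG]
    ring
  have hzt' : zt 0 = 1 / (n : ℝ) * ∑ i, x (i, 0) - 1 / (g : ℝ) * ∑ j, X (j, 0) := by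
    rw [hzt]
    simp [Matrix.mulVec, dotProduct, Fintype.sum_prod_type, hqT, hqGT, Finset.mul_sum]
  have hz' : ∀ i, z (i, 0) = x (i, 0) - 1 / (n : ℝ) * ∑ i, x (i, 0) := by
    intro i
    rw [hz]
    simp [Matrix.mulVec, dotProduct, Fintype.sum_prod_type, hqT, Matrix.mul_apply,
      Finset.mul_sum, sub_mul, Finset.sum_sub_distrib, Matrix.one_apply]
  have hA : ((qA ⊗ₖ clockC) *ᵥ z) (0, 0) = ∑ j, z (w j, 0) := by
    rw [← sum_range_indicator hw fun i => z (i, 0)]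
    simp [Matrix.mulVec, dotProduct, Fintype.sum_prod_type, clockC, hqA]
  have hC : (clockC *ᵥ zt) 0 = zt 0 := by
    simp [Matrix.mulVec, dotProduct, clockC]
  have hg0 : (g : ℝ) ≠ 0 := by
    exact_mod_cast Nat.one_le_iff_ne_zero.mp hg
  rw [hA, hC, hzt']
  simp only [hY', hz', Finset.sum_add_distrib, Finset.sum_sub_distrib, Finset.sum_const,
    Finset.card_univ, Fintype.card_fin, nsmul_eq_mul]
  field_simp
  ring
end

section
/- Let τ > 0, n, g ≥ 1, q = (1/n)·𝟙_n, A = [[1, τ],[0, 1]], B = [τ, 1]^⊤, C = [1, 0], and let H ∈ ℝ^{2×1}, q_A ∈ ℝ^n, and V' ∈ ℝ^{n×E} be matrices with V'·V = I_n − 𝟙_n·q^⊤ for a matrix V ∈ ℝ^{E×n}. Suppose the sequences z̃, ẑ : ℕ → ℝ², x : ℕ → ℝ^{2n}, u : ℕ → ℝ^n, v̄, v̄_G : ℕ → ℝ², w_G : ℕ → ℝ^g, ξ̂ : ℕ → ℝ^{2E} satisfy: (i) z̃[k+1] = A·z̃[k] + (q^⊤ ⊗ B)·u[k] + v̄[k]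 − v̄_G[k]; (ii) Ȳ[k] = −g·C·z̃[k] − (q_A^⊤ ⊗ C)·z[k] + 𝟙_g^⊤·w_G[k], where z[k] = ((I_n − 𝟙_n·q^⊤) ⊗ I₂)·x[k]; (iii) ẑ[k+1] = A·ẑ[k] + A·H·( Ȳ[k] + g·C·ẑ[k] + (q_A^⊤·V' ⊗ C)·ξ̂[k] ) + (q^⊤ ⊗ B)·u[k], with ξ[k] = (V ⊗ I₂)·x[k]. Then the estimation error e_z̃[k] = z̃[k] − ẑ[k] satisfies e_z̃[k+1] = A·(I₂ − H·(−g·C))·e_z̃[k] − A·H·𝟙_g^⊤·w_G[k] + A·H·(q_A^⊤·V' ⊗ C)·e[k] + v̄[k] − v̄_G[k], where e[k] = ξ[k] − ξ̂[k]. -/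
/-!
Subtracting the two recursions cancels the common input `(qᵀ ⊗ B) u`. Since
`V' V = I - 𝟙 qᵀ`, the mixed-product rule for Kronecker products rewrites the unknown
`(q_A ⊗ C) z` in the measurement as `(q_A V' ⊗ C) ξ`, so the innovation depends on the states
only through `z̃ - ẑ` and `ξ - ξ̂`. What is left is linearity.
-/

open Matrix Kronecker

/-- The clock state-transition matrix `A = [[1, τ],[0, 1]]`. -/
noncomputable def clockA (τ : ℝ) : Matrix (Fin 2) (Fin 2) ℝ := !![1, τ; 0, 1]

/-- The clock input matrix `B = [τ, 1]ᵀ`. -/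
noncomputable def clockB (τ : ℝ) : Matrix (Fin 2) (Fin 1) ℝ := !![τ; 1]

theorem stmt10 (τ : ℝ) (hτ : 0 < τ) (n g E : ℕ) (hn : 1 ≤ n) (hg : 1 ≤ g)
    (qT : Matrix (Fin 1) (Fin n) ℝ) (hqT : qT = Matrix.of fun _ _ => 1 / (n : ℝ))
    (H : Matrix (Fin 2) (Fin 1) ℝ) (qA : Matrix (Fin 1) (Fin n) ℝ)
    (V' : Matrix (Fin n) (Fin E) ℝ) (V : Matrix (Fin E) (Fin n) ℝ)
    (hVV : V' * V = (1 : Matrix (Fin n) (Fin n) ℝ)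
      - (Matrix.of (fun _ _ => (1 : ℝ)) : Matrix (Fin n) (Fin 1) ℝ) * qT)
    (zt zhat : ℕ → Fin 2 → ℝ) (x : ℕ → Fin n × Fin 2 → ℝ) (u : ℕ → Fin n → ℝ)
    (vb vbG : ℕ → Fin 2 → ℝ) (wG : ℕ → Fin g → ℝ)
    (ξhat : ℕ → Fin E × Fin 2 → ℝ) (Ybar : ℕ → ℝ)
    (z : ℕ → Fin n × Fin 2 → ℝ)
    (hz : ∀ k, z k = ((((1 : Matrix (Fin n) (Fin n) ℝ)
        - (Matrix.of (fun _ _ => (1 : ℝ)) : Matrix (Fin n) (Fin 1) ℝ) * qT)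
          ⊗ₖ (1 : Matrix (Fin 2) (Fin 2) ℝ)) *ᵥ x k))
    (ξ : ℕ → Fin E × Fin 2 → ℝ)
    (hξ : ∀ k, ξ k = (V ⊗ₖ (1 : Matrix (Fin 2) (Fin 2) ℝ)) *ᵥ x k)
    (hzt : ∀ k, zt (k + 1)
      = clockA τ *ᵥ zt k
        + (fun i => ((qT ⊗ₖ clockB τ) *ᵥ (fun p => u k p.1)) (0, i))
        + vb k - vbG k)
    (hY : ∀ k, Ybar k
      = -(g : ℝ) * (clockC *ᵥ zt k) 0 - ((qA ⊗ₖ clockC) *ᵥ z k) (0, 0)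
        + ∑ j, wG k j)
    (hzhat : ∀ k, zhat (k + 1)
      = clockA τ *ᵥ zhat k
        + (clockA τ * H) *ᵥ (fun _ =>
            Ybar k + (g : ℝ) * (clockC *ᵥ zhat k) 0
              + (((qA * V') ⊗ₖ clockC) *ᵥ ξhat k) (0, 0))
        + (fun i => ((qT ⊗ₖ clockB τ) *ᵥ (fun p => u k p.1)) (0, i)))
    (ez : ℕ → Fin 2 → ℝ) (hez : ∀ k, ez k = zt k - zhat k)
    (e : ℕ → Fin E × Fin 2 → ℝ) (he : ∀ k, e k = ξ k - ξhat k) :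
    ∀ k, ez (k + 1)
      = (clockA τ * ((1 : Matrix (Fin 2) (Fin 2) ℝ) - H * (-(g : ℝ) • clockC))) *ᵥ ez k
        - (clockA τ * H) *ᵥ (fun _ => ∑ j, wG k j)
        + (clockA τ * H) *ᵥ (fun _ => (((qA * V') ⊗ₖ clockC) *ᵥ e k) (0, 0))
        + vb k - vbG k := by
  intro k
  have key : (qA ⊗ₖ clockC) *ᵥ z k = ((qA * V') ⊗ₖ clockC) *ᵥ ξ k := by
    rw [hz, ← hVV, hξ, mulVec_mulVec, mulVec_mulVec, ← mul_kronecker_mul, ← mul_kronecker_mul,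
      Matrix.mul_assoc]
  have hKe : (((qA * V') ⊗ₖ clockC) *ᵥ e k) (0, 0)
      = (((qA * V') ⊗ₖ clockC) *ᵥ ξ k) (0, 0)
        - (((qA * V') ⊗ₖ clockC) *ᵥ ξhat k) (0, 0) := by
    rw [he, mulVec_sub, Pi.sub_apply]
  -- Push the matrix product onto `ez k`, keeping the gain `A * H` as a single factor.
  have hM : clockA τ * ((1 : Matrix (Fin 2) (Fin 2) ℝ) - H * (-(g : ℝ) • clockC))
      = clockA τ + (g : ℝ) • (clockA τ * H * clockC) := by
    simp [Matrix.mul_add, Matrix.mul_assoc]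
  rw [hM, add_mulVec, smul_mulVec, ← mulVec_mulVec, hKe, hez, hez, hzt, hzhat, hY, key]
  ext i
  simp only [mulVec_sub, Pi.add_apply, Pi.sub_apply, Pi.smul_apply, smul_eq_mul]
  generalize clockA τ * H = G
  simp only [mulVec, dotProduct, Fin.sum_univ_one]
  ring
end
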